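/- arXiv:2110.05051 — 6 statements merged into one kernel-verified Lean document; each statement's English description precedes it below -/
import Mathlib

section
/- Let ν ≥ 0, α > -1 and c > 0, and for k ∈ ℕ let μ_{k,0} = ∫_0^∞ x^{k+α} e^{-cx} J_ν(x) dx denote the core moments. Then for every integer k ≥ 1 the three-term recursion μ_{k+1,0} = (1/(c²+1)) · ( c·(2(k+α)+1)·μ_{k,0} − ((k+α)² − ν²)·μ_{k−1,0} ) holds. -/
open MeasureTheory

/-- Bessel function of the first kind of order `ν`, defined via its power series. -/
noncomputable def besselJ (ν x : ℝ) : ℝ :=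
  ∑' m : ℕ, (-1 : ℝ) ^ m / (m.factorial * Real.Gamma ((m : ℝ) + ν + 1)) *
    (x / 2) ^ (2 * (m : ℝ) + ν)

/-- The core moments `μ_{k,0} = ∫_0^∞ x^{k+α} e^{-cx} J_ν(x) dx`. -/
noncomputable def coreMoment (ν α c : ℝ) (k : ℕ) : ℝ :=
  ∫ x in Set.Ioi (0 : ℝ), x ^ ((k : ℝ) + α) * Real.exp (-c * x) * besselJ ν x

open Filter Topology

noncomputable def besP (ν t : ℝ) : ℝ :=
  ∑' m : ℕ, (-1 : ℝ) ^ m / (m.factorial * Real.Gamma ((m : ℝ) + ν + 1)) * t ^ m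

lemma bes_gamma_ge (ν : ℝ) (hν : 0 ≤ ν) (m : ℕ) :
    Real.Gamma (ν + 1) ≤ Real.Gamma ((m : ℝ) + ν + 1) := by
  induction m with
  | zero => rw [Nat.cast_zero, zero_add]
  | succ n ih =>
    have h : ((n + 1 : ℕ) : ℝ) + ν + 1 = ((n : ℝ) + ν + 1) + 1 := by push_cast; ring
    have hn : (0 : ℝ) ≤ n := Nat.cast_nonneg n
    have hne : (n : ℝ) + ν + 1 ≠ 0 := by positivity
    rw [h, Real.Gamma_add_one (s := (n : ℝ) + ν + 1) hne]
    have hp : 0 < Real.Gamma ((n : ℝ) + ν + 1) := Real.Gamma_pos_of_pos (by positivity)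
    nlinarith [mul_nonneg (add_nonneg hn hν) hp.le]

lemma bes_coef_le (ν : ℝ) (hν : 0 ≤ ν) (m : ℕ) :
    |(-1 : ℝ) ^ m / (m.factorial * Real.Gamma ((m : ℝ) + ν + 1))| ≤
      (Real.Gamma (ν + 1))⁻¹ * (1 / m.factorial) := by
  have h0 : 0 < Real.Gamma (ν + 1) := Real.Gamma_pos_of_pos (by positivity)
  have h1 := bes_gamma_ge ν hν m
  have hf : (0 : ℝ) < m.factorial := by exact_mod_cast m.factorial_pos
  rw [abs_div, abs_pow, abs_neg, abs_one, one_pow, abs_of_pos (mul_pos hf (h0.trans_le h1)),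
    inv_eq_one_div, div_mul_div_comm, one_mul, mul_comm (Real.Gamma (ν + 1))]
  gcongr

lemma besP_summable (ν : ℝ) (hν : 0 ≤ ν) (t : ℝ) :
    Summable fun m : ℕ => (-1 : ℝ) ^ m / (m.factorial * Real.Gamma ((m : ℝ) + ν + 1)) * t ^ m := by
  refine Summable.of_norm_bounded
    (g := fun m : ℕ => (Real.Gamma (ν + 1))⁻¹ * (|t| ^ m / m.factorial))
    ((Real.summable_pow_div_factorial |t|).mul_left _) ?_
  intro m
  rw [Real.norm_eq_abs, abs_mul, abs_pow]
  have := mul_le_mul_of_nonneg_right (bes_coef_le ν hν m) (by positivity : 0 ≤ |t| ^ m)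
  refine this.trans (le_of_eq (by ring))

lemma bes_shift (ν t : ℝ) (n : ℕ) :
    (-1 : ℝ) ^ (n + 1) / ((n + 1).factorial * Real.Gamma (((n + 1 : ℕ) : ℝ) + ν + 1)) *
      (((n + 1 : ℕ) : ℝ) * t ^ n) =
    -((-1 : ℝ) ^ n / (n.factorial * Real.Gamma ((n : ℝ) + (ν + 1) + 1)) * t ^ n) := by
  have h : ((n + 1 : ℕ) : ℝ) + ν + 1 = (n : ℝ) + (ν + 1) + 1 := by push_cast; ring
  rw [h, Nat.factorial_succ]
  have hn : ((n + 1 : ℕ) : ℝ) ≠ 0 := by positivity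
  have hf : (n.factorial : ℝ) ≠ 0 := by positivity
  rw [Nat.cast_mul, pow_succ]
  by_cases hG : Real.Gamma ((n : ℝ) + (ν + 1) + 1) = 0
  · simp [hG]
  · field_simp

lemma besP_hasDerivAt (ν : ℝ) (hν : 0 ≤ ν) (t : ℝ) :
    HasDerivAt (besP ν) (-besP (ν + 1) t) t := by
  set R := |t| + 1 with hR
  have hR0 : 0 ≤ R := by positivity
  have key := hasDerivAt_tsum_of_isPreconnected
    (g := fun (m : ℕ) (y : ℝ) =>
      (-1 : ℝ) ^ m / (m.factorial * Real.Gamma ((m : ℝ) + ν + 1)) * y ^ m)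
    (g' := fun (m : ℕ) (y : ℝ) =>
      (-1 : ℝ) ^ m / (m.factorial * Real.Gamma ((m : ℝ) + ν + 1)) * ((m : ℝ) * y ^ (m - 1)))
    (u := fun m : ℕ => (Real.Gamma (ν + 1))⁻¹ * (1 / m.factorial) * ((m : ℝ) * R ^ (m - 1)))
    (t := Metric.ball (0 : ℝ) R) (y₀ := 0) (y := t)
    ?_ Metric.isOpen_ball (convex_ball _ _).isPreconnected
    (fun m y _ => (hasDerivAt_pow m y).const_mul _) ?_
    (Metric.mem_ball_self (by positivity)) (besP_summable ν hν 0) (by simp [hR])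
  · refine HasDerivAt.congr_deriv (f := besP ν) key ?_
    rw [tsum_eq_zero_add' ?_]
    · simp only [Nat.add_sub_cancel, bes_shift]
      simp [besP, tsum_neg]
    · simp only [Nat.add_sub_cancel, bes_shift]
      exact (besP_summable (ν + 1) (by positivity) t).neg
  · rw [← summable_nat_add_iff 1]
    refine ((Real.summable_pow_div_factorial R).mul_left (Real.Gamma (ν + 1))⁻¹).congr ?_
    intro n
    simp only [Nat.add_sub_cancel, Nat.factorial_succ, Nat.cast_mul]
    have hn : ((n + 1 : ℕ) : ℝ) ≠ 0 := by positivity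
    field_simp
  · intro m y hy
    have hy' : |y| ≤ R := by simpa using (Metric.mem_ball.1 hy).le
    rw [Real.norm_eq_abs, abs_mul, abs_mul, abs_pow, Nat.abs_cast]
    have := bes_coef_le ν hν m
    gcongr

lemma besP_rec (ν : ℝ) (hν : 0 ≤ ν) (t : ℝ) :
    besP ν t = (ν + 1) * besP (ν + 1) t - t * besP (ν + 2) t := by
  have s1 := besP_summable (ν + 1) (by positivity) t
  have s2 := besP_summable (ν + 2) (by positivity) t
  -- the series with an extra factor m
  have hsum : HasSum (fun m : ℕ => (-1 : ℝ) ^ m /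
      (m.factorial * Real.Gamma ((m : ℝ) + (ν + 1) + 1)) * ((m : ℝ) * t ^ m))
      (- t * besP (ν + 2) t) := by
    rw [← hasSum_nat_add_iff' 1]
    simp only [Finset.range_one, Finset.sum_singleton, Nat.cast_zero, zero_mul, mul_zero, sub_zero]
    refine (s2.hasSum.mul_left (-t)).congr_fun ?_
    intro n
    have := bes_shift (ν + 1) t n
    rw [show ν + 2 = ν + 1 + 1 by ring]
    rw [pow_succ t]
    linear_combination t * this
  have h2 := (s1.hasSum.mul_left (ν + 1)).add hsum
  rw [besP]
  refine Eq.trans ?_ (h2.tsum_eq.trans (by simp only [besP]; ring))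
  congr 1
  ext m
  have hm : (0 : ℝ) < (m : ℝ) + ν + 1 := by positivity
  rw [show (m : ℝ) + (ν + 1) + 1 = ((m : ℝ) + ν + 1) + 1 by ring, Real.Gamma_add_one hm.ne']
  have hG := (Real.Gamma_pos_of_pos hm).ne'
  field_simp
  ring

lemma besselJ_eq (ν x : ℝ) (hx : 0 < x) :
    besselJ ν x = (x / 2) ^ ν * besP ν (x ^ 2 / 4) := by
  rw [besselJ, besP, ← tsum_mul_left]
  congr 1
  ext m
  rw [Real.rpow_add (by positivity), Real.rpow_mul (by positivity), Real.rpow_natCast]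
  rw [show ((x / 2) ^ (2 : ℝ)) = x ^ 2 / 4 by
    rw [Real.rpow_two]; ring]
  ring

noncomputable def besD (ν x : ℝ) : ℝ :=
  (x / 2) ^ ν * (ν / x * besP ν (x ^ 2 / 4) - x / 2 * besP (ν + 1) (x ^ 2 / 4))

lemma bes_rpow_hasDerivAt (ν x : ℝ) (hx : 0 < x) :
    HasDerivAt (fun y : ℝ => (y / 2) ^ ν) (ν / x * (x / 2) ^ ν) x := by
  have h := ((hasDerivAt_id x).div_const 2).rpow_const (p := ν) (Or.inl (by simp; positivity))
  refine h.congr_deriv ?_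
  change 1 / 2 * ν * (x / 2) ^ (ν - 1) = _
  rw [Real.rpow_sub_one (by positivity)]
  field_simp

lemma bes_P_comp (ν x : ℝ) (hν : 0 ≤ ν) :
    HasDerivAt (fun y : ℝ => besP ν (y ^ 2 / 4)) (-besP (ν + 1) (x ^ 2 / 4) * (x / 2)) x := by
  have h1 : HasDerivAt (fun y : ℝ => y ^ 2 / 4) (x / 2) x := by
    refine ((hasDerivAt_pow 2 x).div_const 4).congr_deriv ?_
    push_cast; ring
  exact (besP_hasDerivAt ν hν (x ^ 2 / 4)).comp x h1

lemma besselJ_hasDerivAt (ν x : ℝ) (hν : 0 ≤ ν) (hx : 0 < x) :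
    HasDerivAt (besselJ ν) (besD ν x) x := by
  have h := (bes_rpow_hasDerivAt ν x hx).mul (bes_P_comp ν x hν)
  refine (h.congr_deriv ?_).congr_of_eventuallyEq ?_
  · rw [besD]; ring
  · filter_upwards [lt_mem_nhds hx] with y hy
    exact besselJ_eq ν y hy

lemma besD_hasDerivAt (ν x : ℝ) (hν : 0 ≤ ν) (hx : 0 < x) :
    HasDerivAt (besD ν) (-besD ν x / x - (1 - ν ^ 2 / x ^ 2) * besselJ ν x) x := by
  have h1 : HasDerivAt (fun y : ℝ => ν / y) (-ν / x ^ 2) x := by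
    have := (hasDerivAt_inv hx.ne').const_mul ν
    refine this.congr_deriv ?_
    ring
  have h2 : HasDerivAt (fun y : ℝ => y / 2) (1 / 2) x := (hasDerivAt_id x).div_const 2
  have h := (bes_rpow_hasDerivAt ν x hx).mul
    ((h1.mul (bes_P_comp ν x hν)).sub (h2.mul (bes_P_comp (ν + 1) x (by positivity))))
  refine h.congr_deriv ?_
  simp only [Pi.mul_apply, Pi.sub_apply]
  rw [besselJ_eq ν x hx, besD, show ν + 1 + 1 = ν + 2 by ring]
  have hr := besP_rec ν hν (x ^ 2 / 4)
  generalize besP ν (x ^ 2 / 4) = p at *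
  generalize besP (ν + 1) (x ^ 2 / 4) = q at *
  generalize besP (ν + 2) (x ^ 2 / 4) = r at *
  generalize (x / 2) ^ ν = A at *
  subst hr
  field_simp
  ring

lemma bes_energy (ν x : ℝ) (hν : 0 ≤ ν) (hx : 1 ≤ x) :
    besD ν x ^ 2 + besselJ ν x ^ 2 ≤
      (besD ν 1 ^ 2 + besselJ ν 1 ^ 2) * Real.exp (ν ^ 2) := by
  set E : ℝ → ℝ := fun x => (besD ν x ^ 2 + besselJ ν x ^ 2) * Real.exp (ν ^ 2 / x) with hE
  have hd : ∀ y : ℝ, 0 < y → HasDerivAt E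
      (Real.exp (ν ^ 2 / y) * (-(2 * besD ν y ^ 2 / y) -
        ν ^ 2 / y ^ 2 * (besD ν y - besselJ ν y) ^ 2)) y := by
    intro y hy
    have h1 : HasDerivAt (fun y : ℝ => ν ^ 2 / y) (-ν ^ 2 / y ^ 2) y := by
      have := (hasDerivAt_inv hy.ne').const_mul (ν ^ 2)
      refine this.congr_deriv ?_
      ring
    have h := (((besD_hasDerivAt ν y hν hy).pow 2).add
      ((besselJ_hasDerivAt ν y hν hy).pow 2)).mul h1.exp
    refine h.congr_deriv ?_
    simp only [Pi.add_apply, Pi.pow_apply]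
    field_simp
    ring
  have hanti : AntitoneOn E (Set.Ici 1) := by
    apply antitoneOn_of_deriv_nonpos (convex_Ici 1)
    · intro y hy
      exact (hd y (lt_of_lt_of_le one_pos hy)).continuousAt.continuousWithinAt
    · intro y hy
      rw [interior_Ici] at hy
      exact (hd y (one_pos.trans hy)).differentiableAt.differentiableWithinAt
    · intro y hy
      rw [interior_Ici] at hy
      have hy0 : 0 < y := one_pos.trans hy
      rw [(hd y hy0).deriv]
      apply mul_nonpos_of_nonneg_of_nonpos (Real.exp_pos _).le
      have a1 : 0 ≤ 2 * besD ν y ^ 2 / y := by positivity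
      have a2 : 0 ≤ ν ^ 2 / y ^ 2 * (besD ν y - besselJ ν y) ^ 2 := by positivity
      linarith
  have h := hanti (Set.mem_Ici.2 le_rfl) (Set.mem_Ici.2 hx) hx
  simp only [hE, div_one] at h
  refine le_trans ?_ h
  have : 1 ≤ Real.exp (ν ^ 2 / x) := Real.one_le_exp (by positivity)
  have h3 : 0 ≤ besD ν x ^ 2 + besselJ ν x ^ 2 := by positivity
  nlinarith

lemma bes_bound (ν : ℝ) (hν : 0 ≤ ν) :
    ∃ M : ℝ, 0 ≤ M ∧ ∀ x : ℝ, 0 < x → |besselJ ν x| ≤ M ∧ |x * besD ν x| ≤ M * (1 + x) := by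
  have cP : ∀ μ : ℝ, 0 ≤ μ → Continuous (fun y : ℝ => besP μ (y ^ 2 / 4)) := fun μ hμ =>
    continuous_iff_continuousAt.2 fun y => (bes_P_comp μ y hμ).continuousAt
  have cA : Continuous (fun y : ℝ => (y / 2) ^ ν) :=
    (continuous_id.div_const 2).rpow_const (fun _ => Or.inr hν)
  have c1 : Continuous (fun y : ℝ => (y / 2) ^ ν * besP ν (y ^ 2 / 4)) := cA.mul (cP ν hν)
  have c2 : Continuous (fun y : ℝ => (y / 2) ^ ν *
      (ν * besP ν (y ^ 2 / 4) - y ^ 2 / 2 * besP (ν + 1) (y ^ 2 / 4))) := by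
    have := cP ν hν
    have := cP (ν + 1) (by positivity)
    fun_prop
  obtain ⟨M1, h1⟩ := isCompact_Icc.exists_bound_of_continuousOn (s := Set.Icc (0 : ℝ) 1)
    c1.continuousOn
  obtain ⟨M2, h2⟩ := isCompact_Icc.exists_bound_of_continuousOn (s := Set.Icc (0 : ℝ) 1)
    c2.continuousOn
  set K := (besD ν 1 ^ 2 + besselJ ν 1 ^ 2) * Real.exp (ν ^ 2) with hK
  have hM1 : 0 ≤ M1 := (norm_nonneg _).trans (h1 0 (by simp))
  have hM2 : 0 ≤ M2 := (norm_nonneg _).trans (h2 0 (by simp))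
  have hs := Real.sqrt_nonneg K
  refine ⟨M1 + M2 + Real.sqrt K, by positivity, fun x hx => ?_⟩
  rcases le_total x 1 with hx1 | hx1
  · have e1 := h1 x ⟨hx.le, hx1⟩
    have e2 := h2 x ⟨hx.le, hx1⟩
    rw [Real.norm_eq_abs] at e1 e2
    rw [← besselJ_eq ν x hx] at e1
    have : x * besD ν x = (x / 2) ^ ν *
      (ν * besP ν (x ^ 2 / 4) - x ^ 2 / 2 * besP (ν + 1) (x ^ 2 / 4)) := by
      rw [besD]; field_simp
    rw [this]
    exact ⟨by linarith, by nlinarith⟩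
  · have h := bes_energy ν x hν hx1
    rw [← hK] at h
    have e1 : |besselJ ν x| ≤ Real.sqrt K := Real.abs_le_sqrt (by nlinarith [sq_nonneg (besD ν x)])
    have e2 : |besD ν x| ≤ Real.sqrt K :=
      Real.abs_le_sqrt (by nlinarith [sq_nonneg (besselJ ν x)])
    refine ⟨by linarith, ?_⟩
    rw [abs_mul, abs_of_pos hx]
    nlinarith [mul_le_mul_of_nonneg_left e2 hx.le]

lemma bes_integrable (ν a c : ℝ) (hν : 0 ≤ ν) (ha : -1 < a) (hc : 0 < c) :
    IntegrableOn (fun x : ℝ => x ^ a * Real.exp (-c * x) * besselJ ν x) (Set.Ioi 0) := by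
  obtain ⟨M, -, hM⟩ := bes_bound ν hν
  have h := integrableOn_rpow_mul_exp_neg_mul_rpow (p := 1) (s := a) ha one_pos hc
  simp only [Real.rpow_one] at h
  refine Integrable.mul_bdd (c := M) h ?_ ?_
  · refine ContinuousOn.aestronglyMeasurable (fun y hy => ?_) measurableSet_Ioi
    exact (besselJ_hasDerivAt ν y hν hy).continuousAt.continuousWithinAt
  · filter_upwards [ae_restrict_mem measurableSet_Ioi] with x hx
    exact (hM x hx).1

lemma bes_main (ν s c : ℝ) (hν : 0 ≤ ν) (hs : 0 < s) (hc : 0 < c) :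
    ∫ x in Set.Ioi (0 : ℝ), ((ν ^ 2 - s ^ 2) * (x ^ (s - 1) * Real.exp (-c * x) * besselJ ν x) +
      c * (2 * s + 1) * (x ^ s * Real.exp (-c * x) * besselJ ν x) -
      (1 + c ^ 2) * (x ^ (s + 1) * Real.exp (-c * x) * besselJ ν x)) = 0 := by
  obtain ⟨M, hM0, hM⟩ := bes_bound ν hν
  set G : ℝ → ℝ := fun x => x ^ s * Real.exp (-c * x) * (x * besD ν x - (s - c * x) * besselJ ν x)
    with hG
  have hbd : ∀ x : ℝ, 0 < x → ‖G x‖ ≤ M * (1 + s) * (x ^ s * Real.exp (-c * x)) +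
      M * (1 + c) * (x ^ (s + 1) * Real.exp (-c * x)) := by
    intro x hx
    obtain ⟨b1, b2⟩ := hM x hx
    have hp : 0 ≤ x ^ s * Real.exp (-c * x) := by positivity
    rw [hG, Real.norm_eq_abs, abs_mul, abs_of_nonneg hp, Real.rpow_add_one hx.ne']
    have h3 : |x * besD ν x - (s - c * x) * besselJ ν x| ≤ M * (1 + x) + (s + c * x) * M := by
      refine (abs_sub _ _).trans (add_le_add b2 ?_)
      rw [abs_mul]
      refine mul_le_mul ?_ b1 (abs_nonneg _) (by positivity)
      have : 0 < c * x := by positivity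
      rw [abs_le]; constructor <;> linarith
    refine (mul_le_mul_of_nonneg_left h3 hp).trans (le_of_eq (by ring))
  have ht : ∀ a : ℝ, Tendsto (fun x : ℝ => x ^ a * Real.exp (-c * x)) atTop (𝓝 0) := fun a =>
    tendsto_rpow_mul_exp_neg_mul_atTop_nhds_zero a c hc
  have h0 : ∀ a : ℝ, 0 < a → Tendsto (fun x : ℝ => x ^ a * Real.exp (-c * x)) (𝓝[>] 0) (𝓝 0) := by
    intro a ha
    have hcont : Continuous (fun x : ℝ => x ^ a * Real.exp (-c * x)) :=
      (continuous_id.rpow_const (fun _ => Or.inr ha.le)).mul (by fun_prop)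
    have := (hcont.tendsto 0).mono_left (nhdsWithin_le_nhds (s := Set.Ioi 0))
    simpa [Real.zero_rpow ha.ne'] using this
  have l1 : Tendsto G atTop (𝓝 0) := by
    refine squeeze_zero_norm' ((eventually_gt_atTop 0).mono hbd) ?_
    simpa using ((ht s).const_mul (M * (1 + s))).add ((ht (s + 1)).const_mul (M * (1 + c)))
  have l0 : Tendsto G (𝓝[>] 0) (𝓝 0) := by
    refine squeeze_zero_norm' (eventually_mem_nhdsWithin.mono hbd) ?_
    simpa using ((h0 s hs).const_mul (M * (1 + s))).add
      ((h0 (s + 1) (by linarith)).const_mul (M * (1 + c)))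
  have i1 := (bes_integrable ν (s - 1) c hν (by linarith) hc).const_mul (ν ^ 2 - s ^ 2)
  have i2 := (bes_integrable ν s c hν (by linarith) hc).const_mul (c * (2 * s + 1))
  have i3 := (bes_integrable ν (s + 1) c hν (by linarith) hc).const_mul (1 + c ^ 2)
  have hG0 : G 0 = 0 := by simp [hG, Real.zero_rpow hs.ne']
  have hcont : ContinuousWithinAt G (Set.Ici 0) 0 := by
    rw [← continuousWithinAt_Ioi_iff_Ici, ContinuousWithinAt, hG0]
    exact l0
  have hderiv : ∀ x ∈ Set.Ioi (0 : ℝ), HasDerivAt G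
      ((ν ^ 2 - s ^ 2) * (x ^ (s - 1) * Real.exp (-c * x) * besselJ ν x) +
      c * (2 * s + 1) * (x ^ s * Real.exp (-c * x) * besselJ ν x) -
      (1 + c ^ 2) * (x ^ (s + 1) * Real.exp (-c * x) * besselJ ν x)) x := by
    intro x hx
    have hx : 0 < x := hx
    have d1 : HasDerivAt (fun y : ℝ => y ^ s) (s * x ^ (s - 1)) x :=
      Real.hasDerivAt_rpow_const (Or.inl hx.ne')
    have dl : HasDerivAt (fun y : ℝ => -c * y) (-c) x := by
      simpa using (hasDerivAt_id x).const_mul (-c)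
    have dm : HasDerivAt (fun y : ℝ => s - c * y) (-c) x := by
      simpa using ((hasDerivAt_id x).const_mul c).const_sub s
    have d := (d1.mul dl.exp).mul (((hasDerivAt_id x).mul (besD_hasDerivAt ν x hν hx)).sub
      (dm.mul (besselJ_hasDerivAt ν x hν hx)))
    refine HasDerivAt.congr_deriv (f := G) d ?_
    simp only [Pi.mul_apply, Pi.sub_apply, id]
    rw [Real.rpow_sub_one hx.ne', Real.rpow_add_one hx.ne']
    field_simp
    ring
  have key := integral_Ioi_of_hasDerivAt_of_tendsto hcont hderiv ((i1.add i2).sub i3) l1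
  rw [key, hG0, sub_zero]

theorem coreMoment_recurrence (ν α c : ℝ) (hν : 0 ≤ ν) (hα : -1 < α) (hc : 0 < c)
    (k : ℕ) (hk : 1 ≤ k) :
    coreMoment ν α c (k + 1) =
      (1 / (c ^ 2 + 1)) *
        (c * (2 * ((k : ℝ) + α) + 1) * coreMoment ν α c k -
          (((k : ℝ) + α) ^ 2 - ν ^ 2) * coreMoment ν α c (k - 1)) := by
  have hk' : (1 : ℝ) ≤ k := by exact_mod_cast hk
  have hs : 0 < (k : ℝ) + α := by linarith
  have h := bes_main ν ((k : ℝ) + α) c hν hs hc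
  have i1 := (bes_integrable ν ((k : ℝ) + α - 1) c hν (by linarith) hc).const_mul
    (ν ^ 2 - ((k : ℝ) + α) ^ 2)
  have i2 := (bes_integrable ν ((k : ℝ) + α) c hν (by linarith) hc).const_mul
    (c * (2 * ((k : ℝ) + α) + 1))
  have i3 := (bes_integrable ν ((k : ℝ) + α + 1) c hν (by linarith) hc).const_mul (1 + c ^ 2)
  rw [integral_sub (by exact i1.add i2) i3, integral_add i1 i2, integral_const_mul, integral_const_mul,
    integral_const_mul] at h
  simp only [coreMoment]
  rw [show ((k + 1 : ℕ) : ℝ) + α = (k : ℝ) + α + 1 by push_cast; ring,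
    show ((k - 1 : ℕ) : ℝ) + α = (k : ℝ) + α - 1 by push_cast [hk]; ring]
  have hc2 : c ^ 2 + 1 ≠ 0 := by positivity
  rw [one_div, eq_inv_mul_iff_mul_eq₀ hc2]
  linarith
end

section
/- Let (μ_j)_{j≥0} be a real sequence and let k ≥ 1. Assume the Hankel determinants D_k, D_{k+1}, D_{k+2} are all nonzero, and let x^{(k+1)} = M_{k+1}^{-1} e_{k+1} and x^{(k+2)} = M_{k+2}^{-1} e_{k+2}. Then F_{k+1}/D_{k+1} − F_k/D_k = − x_{k+1}^{(k+2)} / x_{k+2}^{(k+2)} + x_k^{(k+1)} / x_{k+1}^{(k+1)}; that is, the Gaussian recurrence coefficient α_k = F_{k+1}/D_{k+1} − F_k/D_k is expressed through components of the solutions of the two linear systems. -/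
open Matrix

/-- The Hankel moment matrix `(M_m)_{ij} = μ_{i+j-2}` (1-based), i.e. `μ (i + j)` 0-based. -/
def hankelM (μ : ℕ → ℝ) (m : ℕ) : Matrix (Fin m) (Fin m) ℝ :=
  Matrix.of fun i j => μ ((i : ℕ) + (j : ℕ))

/-- The matrix `N_m` with `(N_m)_{il} = μ_{i+l-2}` for `l ≤ m-1` and `(N_m)_{im} = μ_{i+m-1}`
(1-based indices). -/
def hankelN (μ : ℕ → ℝ) (m : ℕ) : Matrix (Fin m) (Fin m) ℝ :=
  Matrix.of fun i j => if (j : ℕ) < m - 1 then μ ((i : ℕ) + (j : ℕ)) else μ ((i : ℕ) + m)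

theorem adj_last_aux (μ : ℕ → ℝ) (m : ℕ) :
    (hankelM μ (m + 1)).adjugate (Fin.last m) (Fin.last m) = (hankelM μ m).det := by
  rw [adjugate_fin_succ_eq_det_submatrix, ← two_mul, pow_mul]
  simp only [even_two, Even.neg_pow, one_pow, one_mul, Fin.succAbove_last]
  congr 1

theorem adj_prev_aux (μ : ℕ → ℝ) (n : ℕ) (h : n < n + 2) :
    (hankelM μ (n + 2)).adjugate (⟨n, h⟩ : Fin (n + 2)) (Fin.last (n + 1)) =
      - (hankelN μ (n + 1)).det := by
  rw [adjugate_fin_succ_eq_det_submatrix]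
  have e : (-1 : ℝ) ^ (((Fin.last (n + 1) : Fin (n + 2)) : ℕ) + ((⟨n, h⟩ : Fin (n + 2)) : ℕ)) = -1 := by
    apply Odd.neg_one_pow
    exact ⟨n, by simp only [Fin.val_last]; omega⟩
  rw [e, neg_one_mul]
  congr 2
  ext i j
  simp only [hankelM, hankelN, submatrix_apply, of_apply, Fin.succAbove, Fin.lt_def,
    Fin.val_castSucc, Fin.val_last, i.isLt, if_true]
  have hj := j.isLt
  by_cases hjn : (j : ℕ) < n
  · simp [hjn]
  · have : (j : ℕ) = n := by omega
    simp [this]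

theorem ratio_aux (μ : ℕ → ℝ) (n : ℕ) (h : n < n + 2) (h2 : (hankelM μ (n + 2)).det ≠ 0) :
    ((hankelM μ (n + 2))⁻¹ *ᵥ Pi.single (Fin.last (n + 1)) 1) (⟨n, h⟩ : Fin (n + 2)) /
      ((hankelM μ (n + 2))⁻¹ *ᵥ Pi.single (Fin.last (n + 1)) 1) (Fin.last (n + 1)) =
    - ((hankelN μ (n + 1)).det / (hankelM μ (n + 1)).det) := by
  have hd : Ring.inverse (hankelM μ (n + 2)).det ≠ 0 := by
    rw [Ring.inverse_eq_inv']; exact inv_ne_zero h2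
  simp only [mulVec_single_one, col_apply, inv_def, Matrix.smul_apply, smul_eq_mul, adj_prev_aux, adj_last_aux]
  rw [mul_div_mul_left _ _ hd, neg_div]

theorem alpha_coefficient_eq_ratio_of_solutions (μ : ℕ → ℝ) (k : ℕ) (hk : 1 ≤ k)
    (h1 : (hankelM μ k).det ≠ 0)
    (h2 : (hankelM μ (k + 1)).det ≠ 0)
    (h3 : (hankelM μ (k + 2)).det ≠ 0) :
    (hankelN μ (k + 1)).det / (hankelM μ (k + 1)).det -
        (hankelN μ k).det / (hankelM μ k).det =
      - ((hankelM μ (k + 2))⁻¹ *ᵥ Pi.single (Fin.last (k + 1)) 1) (⟨k, by omega⟩ : Fin (k + 2)) /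
          ((hankelM μ (k + 2))⁻¹ *ᵥ Pi.single (Fin.last (k + 1)) 1) (Fin.last (k + 1)) +
        ((hankelM μ (k + 1))⁻¹ *ᵥ Pi.single (Fin.last k) 1) (⟨k - 1, by omega⟩ : Fin (k + 1)) /
          ((hankelM μ (k + 1))⁻¹ *ᵥ Pi.single (Fin.last k) 1) (Fin.last k) := by
  obtain ⟨n, rfl⟩ : ∃ n, k = n + 1 := ⟨k - 1, by omega⟩
  rw [neg_div, ratio_aux μ (n + 1) _ h3]
  have := ratio_aux μ n (by omega) h2
  simp only [Nat.add_sub_cancel]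
  rw [this]
  ring
end

section
/- Let α > -1 and k ≥ 1. Let M_k^α ∈ ℝ^{k×k} be the matrix with entries (M_k^α)_{ij} = Γ(i+j+α−1) for 1 ≤ i,j ≤ k, and let R_k^α ∈ ℝ^{k×k} be the upper triangular matrix with (R_k^α)_{ij} = ((j−1)!/(j−i)!) · Γ(α+j) / √(Γ(i)Γ(α+i)) for i ≤ j and 0 otherwise. Then M_k^α = (R_k^α)^T R_k^α; i.e. R_k^α is the Cholesky factor of the Hankel moment matrix of the generalized Laguerre weight x^α e^{-x}. -/
open Matrix

/-- The Hankel moment matrix of the generalized Laguerre weight `x^α e^{-x}`: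
`(M_k^α)_{ij} = Γ(i+j+α−1)` (1-based indices). -/
noncomputable def lagM (α : ℝ) (k : ℕ) : Matrix (Fin k) (Fin k) ℝ :=
  Matrix.of fun i j => Real.Gamma (((i : ℕ) : ℝ) + ((j : ℕ) : ℝ) + α + 1)

/-- The upper triangular matrix `(R_k^α)_{ij} = ((j−1)!/(j−i)!) · Γ(α+j) / √(Γ(i)Γ(α+i))`
for `i ≤ j` (1-based indices), and `0` otherwise. -/
noncomputable def lagR (α : ℝ) (k : ℕ) : Matrix (Fin k) (Fin k) ℝ :=
  Matrix.of fun i j =>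
    if (i : ℕ) ≤ (j : ℕ) then
      ((j : ℕ).factorial : ℝ) / (((j : ℕ) - (i : ℕ)).factorial : ℝ) *
        Real.Gamma (α + ((j : ℕ) : ℝ) + 1) /
        Real.sqrt (Real.Gamma (((i : ℕ) : ℝ) + 1) * Real.Gamma (α + ((i : ℕ) : ℝ) + 1))
    else 0

theorem lag_vandermonde (i : ℕ) : ∀ (j N : ℕ) (α : ℝ), -1 < α → i < N →
    ∑ l ∈ Finset.range N, (i.choose l : ℝ) * (j.descFactorial l : ℝ) / Real.Gamma (α + l + 1)
      = Real.Gamma (i + j + α + 1) / (Real.Gamma (α + i + 1) * Real.Gamma (α + j + 1)) := by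
  induction i with
  | zero =>
    intro j N α hα hN
    obtain ⟨N, rfl⟩ : ∃ M, N = M + 1 := ⟨N - 1, by omega⟩
    rw [Finset.sum_range_succ']
    have h1 : Real.Gamma (α + 1) ≠ 0 := (Real.Gamma_pos_of_pos (by linarith)).ne'
    have h2 : Real.Gamma (α + j + 1) ≠ 0 :=
      (Real.Gamma_pos_of_pos (by have : (0:ℝ) ≤ j := j.cast_nonneg
                                 linarith)).ne'
    have h3 : (j:ℝ) + α + 1 = α + j + 1 := by ring
    simp only [Nat.choose_zero_succ, Nat.cast_zero, zero_mul, zero_div, Finset.sum_const_zero,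
      Nat.choose_self, Nat.descFactorial_zero, Nat.cast_one, h3, add_zero, zero_add]
    field_simp
  | succ i ih =>
    intro j N α hα hN
    obtain ⟨N, rfl⟩ : ∃ M, N = M + 1 := ⟨N - 1, by omega⟩
    have hi : (0:ℝ) ≤ i := i.cast_nonneg
    have hj : (0:ℝ) ≤ j := j.cast_nonneg
    have e1 := ih j (N + 1) α hα (by omega)
    have key : ∑ l ∈ Finset.range (N + 1),
          ((i + 1).choose l : ℝ) * (j.descFactorial l : ℝ) / Real.Gamma (α + l + 1)
        = ∑ l ∈ Finset.range (N + 1),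
          (i.choose l : ℝ) * (j.descFactorial l : ℝ) / Real.Gamma (α + l + 1)
        + ∑ l ∈ Finset.range N,
          (i.choose l : ℝ) * (j.descFactorial (l + 1) : ℝ) / Real.Gamma (α + 1 + l + 1) := by
      rw [Finset.sum_range_succ', Finset.sum_range_succ' _ N,
        add_right_comm (∑ l ∈ Finset.range N, _) _ (∑ l ∈ Finset.range N, _),
        ← Finset.sum_add_distrib]
      congr 1
      · apply Finset.sum_congr rfl
        intro l _
        have h : α + ((l + 1 : ℕ) : ℝ) + 1 = α + 1 + l + 1 := by push_cast; ring
        rw [h, Nat.choose_succ_succ']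
        push_cast
        ring
      · simp
    have e2 : ∑ l ∈ Finset.range N,
          (i.choose l : ℝ) * (j.descFactorial (l + 1) : ℝ) / Real.Gamma (α + 1 + l + 1)
        = j * (Real.Gamma (i + j + α + 1) /
          (Real.Gamma (α + i + 1 + 1) * Real.Gamma (α + j + 1))) := by
      cases j with
      | zero => simp
      | succ j =>
        have e := ih j N (α + 1) (by linarith) (by omega)
        have a1 : (i : ℝ) + j + (α + 1) + 1 = i + ((j + 1 : ℕ) : ℝ) + α + 1 := by push_cast; ring
        have a2 : α + 1 + (i : ℝ) + 1 = α + i + 1 + 1 := by ring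
        have a3 : α + 1 + (j : ℝ) + 1 = α + ((j + 1 : ℕ) : ℝ) + 1 := by push_cast; ring
        rw [a1, a2, a3] at e
        rw [← e, Finset.mul_sum]
        apply Finset.sum_congr rfl
        intro l _
        rw [Nat.succ_descFactorial_succ]
        push_cast
        ring
    rw [key, e1, e2]
    have a1 : ((i + 1 : ℕ) : ℝ) + j + α + 1 = (i + j + α + 1) + 1 := by push_cast; ring
    have a2 : α + ((i + 1 : ℕ) : ℝ) + 1 = (α + i + 1) + 1 := by push_cast; ring
    have p1 : (0:ℝ) < α + i + 1 := by linarith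
    rw [a1, a2, Real.Gamma_add_one (s := i + j + α + 1) (by linarith), Real.Gamma_add_one p1.ne']
    have g1 := (Real.Gamma_pos_of_pos p1).ne'
    have g2 : Real.Gamma (α + j + 1) ≠ 0 := (Real.Gamma_pos_of_pos (by linarith)).ne'
    have p2 := p1.ne'
    field_simp
    ring

theorem lagR_entry (α : ℝ) (k : ℕ) (l j : Fin k) :
    lagR α k l j = ((j : ℕ).descFactorial l : ℝ) * Real.Gamma (α + ((j : ℕ) : ℝ) + 1) /
      Real.sqrt (Real.Gamma (((l : ℕ) : ℝ) + 1) * Real.Gamma (α + ((l : ℕ) : ℝ) + 1)) := by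
  simp only [lagR, Matrix.of_apply]
  split_ifs with h
  · have h0 : (((j : ℕ) - (l : ℕ)).factorial : ℝ) ≠ 0 := by
      exact_mod_cast Nat.factorial_ne_zero _
    congr 2
    rw [div_eq_iff h0, mul_comm]
    exact_mod_cast (Nat.factorial_mul_descFactorial h).symm
  · rw [Nat.descFactorial_eq_zero_iff_lt.2 (by omega)]
    simp

theorem lagM_cholesky (α : ℝ) (hα : -1 < α) (k : ℕ) (hk : 1 ≤ k) :
    lagM α k = (lagR α k)ᵀ * lagR α k := by
  ext i j
  have hpos : ∀ n : ℕ, 0 < Real.Gamma (α + n + 1) := fun n =>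
    Real.Gamma_pos_of_pos (by have : (0:ℝ) ≤ n := n.cast_nonneg
                              linarith)
  have hv := lag_vandermonde i j k α hα i.2
  rw [eq_div_iff (mul_pos (hpos i) (hpos j)).ne'] at hv
  rw [Matrix.mul_apply]
  simp only [Matrix.transpose_apply, lagR_entry, lagM, Matrix.of_apply]
  rw [← hv, Finset.sum_mul, Finset.sum_range]
  apply Finset.sum_congr rfl
  intro l _
  have hf : (0:ℝ) < ((l : ℕ).factorial : ℝ) := by exact_mod_cast Nat.factorial_pos _
  have hl := hpos l
  rw [Real.Gamma_nat_eq_factorial, div_mul_div_comm, Real.mul_self_sqrt (by positivity),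
    Nat.descFactorial_eq_factorial_mul_choose (i : ℕ) l]
  push_cast
  field_simp
end

section
/- Let α > -1 and k ≥ 1. Let R_k^α ∈ ℝ^{k×k} be the upper triangular matrix with (R_k^α)_{ij} = ((j−1)!/(j−i)!) · Γ(α+j) / √(Γ(i)Γ(α+i)) for i ≤ j and 0 otherwise. Then R_k^α is invertible and its inverse is the upper triangular matrix with entries ((R_k^α)^{-1})_{ij} = (−1)^{i+j} √( (j−1)! Γ(α+j) ) / ( (j−i)! Γ(i) Γ(α+i) ) for i ≤ j and 0 otherwise. -/
open Matrix

/-- The claimed inverse of `R_k^α`: the upper triangular matrix with entries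
`(−1)^{i+j} √((j−1)! Γ(α+j)) / ((j−i)! Γ(i) Γ(α+i))` for `i ≤ j` (1-based), `0` otherwise. -/
noncomputable def lagRinv (α : ℝ) (k : ℕ) : Matrix (Fin k) (Fin k) ℝ :=
  Matrix.of fun i j =>
    if (i : ℕ) ≤ (j : ℕ) then
      (-1 : ℝ) ^ ((i : ℕ) + (j : ℕ)) *
        Real.sqrt (((j : ℕ).factorial : ℝ) * Real.Gamma (α + ((j : ℕ) : ℝ) + 1)) /
        ((((j : ℕ) - (i : ℕ)).factorial : ℝ) * Real.Gamma (((i : ℕ) : ℝ) + 1) *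
          Real.Gamma (α + ((i : ℕ) : ℝ) + 1))
    else 0

lemma lagR_aux (n : ℕ) : ∑ m ∈ Finset.range (n + 1),
    (-1 : ℝ) ^ m / ((m.factorial : ℝ) * ((n - m).factorial : ℝ)) = if n = 0 then 1 else 0 := by
  have h := congrArg (Int.cast : ℤ → ℝ) (Int.alternating_sum_range_choose (n := n))
  have h1 : ∑ m ∈ Finset.range (n + 1),
      (-1 : ℝ) ^ m / ((m.factorial : ℝ) * ((n - m).factorial : ℝ))
      = (∑ m ∈ Finset.range (n + 1), (-1 : ℝ) ^ m * (n.choose m : ℝ)) / (n.factorial : ℝ) := by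
    rw [Finset.sum_div]
    refine Finset.sum_congr rfl fun m hm => ?_
    rw [Nat.cast_choose ℝ (by simpa [Nat.lt_succ_iff] using hm)]
    have := Nat.cast_ne_zero (R := ℝ).2 n.factorial_ne_zero
    field_simp
  rw [h1]
  push_cast at h
  rw [h]
  split_ifs with hn
  · simp [hn]
  · simp

lemma lagR_mul (α : ℝ) (hα : -1 < α) (k : ℕ) : lagR α k * lagRinv α k = 1 := by
  have hG : ∀ l : ℕ, 0 < Real.Gamma (α + (l : ℝ) + 1) := fun l =>
    Real.Gamma_pos_of_pos (by have := Nat.cast_nonneg (α := ℝ) l; linarith)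
  ext i j
  rw [Matrix.mul_apply, Matrix.one_apply]
  obtain ⟨i, hi⟩ := i
  obtain ⟨j, hj⟩ := j
  set s : ℕ → ℝ := fun l => Real.sqrt ((l.factorial : ℝ) * Real.Gamma (α + (l : ℝ) + 1)) with hs
  have hspos : ∀ l, 0 < s l := fun l =>
    Real.sqrt_pos.2 (mul_pos (by exact_mod_cast l.factorial_pos) (hG l))
  have hterm : ∀ l : Fin k, lagR α k ⟨i, hi⟩ l * lagRinv α k l ⟨j, hj⟩ =
      (fun l : ℕ => if i ≤ l ∧ l ≤ j then s j / s i * ((-1 : ℝ) ^ (l + j) /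
        (((l - i).factorial : ℝ) * ((j - l).factorial : ℝ))) else 0) (l : ℕ) := by
    rintro ⟨l, hl⟩
    simp only [lagR, lagRinv, Matrix.of_apply, Real.Gamma_nat_eq_factorial]
    by_cases h1 : i ≤ l
    · by_cases h2 : l ≤ j
      · simp only [h1, h2, if_true, and_self]
        change _ / s i * (_ * s j / _) = _
        have a1 := (hG l).ne'
        have a2 := (hspos i).ne'
        have a3 := Nat.cast_ne_zero (R := ℝ).2 l.factorial_ne_zero
        have a4 := Nat.cast_ne_zero (R := ℝ).2 (l - i).factorial_ne_zero
        have a5 := Nat.cast_ne_zero (R := ℝ).2 (j - l).factorial_ne_zero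
        field_simp
      · simp [h2]
    · simp [h1]
  rw [Finset.sum_congr rfl fun l _ => hterm l, Fin.sum_univ_eq_sum_range
    (fun l : ℕ => if i ≤ l ∧ l ≤ j then s j / s i * ((-1 : ℝ) ^ (l + j) /
        (((l - i).factorial : ℝ) * ((j - l).factorial : ℝ))) else 0) k, ← Finset.sum_filter]
  have hf : (Finset.range k).filter (fun l => i ≤ l ∧ l ≤ j) = Finset.Ico i (j + 1) := by
    ext l
    simp only [Finset.mem_filter, Finset.mem_range, Finset.mem_Ico]
    omega
  rw [hf, ← Finset.mul_sum]
  by_cases hij : i ≤ j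
  · obtain ⟨n, rfl⟩ := Nat.exists_eq_add_of_le hij
    rw [Finset.sum_Ico_eq_sum_range]
    have e : ∑ m ∈ Finset.range (i + n + 1 - i), (-1 : ℝ) ^ (i + m + (i + n)) /
        (((i + m - i).factorial : ℝ) * ((i + n - (i + m)).factorial : ℝ)) =
        (-1 : ℝ) ^ n * if n = 0 then 1 else 0 := by
      rw [← lagR_aux, Finset.mul_sum, show i + n + 1 - i = n + 1 by omega]
      refine Finset.sum_congr rfl fun m _ => ?_
      rw [show i + m - i = m by omega, show i + n - (i + m) = n - m by omega,
        show i + m + (i + n) = 2 * i + n + m by omega, pow_add, pow_add, pow_mul]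
      simp [mul_div_assoc]
    rw [e]
    by_cases hn : n = 0
    · subst hn
      simp [(hspos i).ne']
    · simp [hn]
  · rw [Finset.Ico_eq_empty (by omega)]
    have : i ≠ j := by omega
    simp [this]

theorem lagR_inverse (α : ℝ) (hα : -1 < α) (k : ℕ) (hk : 1 ≤ k) :
    IsUnit (lagR α k) ∧ (lagR α k)⁻¹ = lagRinv α k := by
  have h := lagR_mul α hα k
  exact ⟨IsUnit.of_mul_eq_one _ h, Matrix.inv_eq_right_inv h⟩
end

section
/- Let α > -1, c > 0 and k ≥ 1. Let M_k^{α,c} ∈ ℝ^{k×k} have entries (M_k^{α,c})_{ij} = Γ(i+j+α−1) / c^{i+j+α−1} for 1 ≤ i,j ≤ k, and let R_k^{α,c} ∈ ℝ^{k×k} be the upper triangular matrix with (R_k^{α,c})_{ij} = c^{−(α+1)/2} · c^{1−j} · ((j−1)!/(j−i)!) · Γ(α+j) / √(Γ(i)Γ(α+i)) for i ≤ j and 0 otherwise. Then M_k^{α,c} = (R_k^{α,c})^T R_k^{α,c}. -/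
open Matrix

/-- The Hankel moment matrix of the weight `x^α e^{-cx}`:
`(M_k^{α,c})_{ij} = Γ(i+j+α−1)/c^{i+j+α−1}` (1-based indices). -/
noncomputable def lagMc (α c : ℝ) (k : ℕ) : Matrix (Fin k) (Fin k) ℝ :=
  Matrix.of fun i j =>
    Real.Gamma (((i : ℕ) : ℝ) + ((j : ℕ) : ℝ) + α + 1) /
      c ^ (((i : ℕ) : ℝ) + ((j : ℕ) : ℝ) + α + 1)

/-- The upper triangular matrix
`(R_k^{α,c})_{ij} = c^{−(α+1)/2} · c^{1−j} · ((j−1)!/(j−i)!) · Γ(α+j) / √(Γ(i)Γ(α+i))`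
for `i ≤ j` (1-based indices), and `0` otherwise. -/
noncomputable def lagRc (α c : ℝ) (k : ℕ) : Matrix (Fin k) (Fin k) ℝ :=
  Matrix.of fun i j =>
    if (i : ℕ) ≤ (j : ℕ) then
      c ^ (-(α + 1) / 2) * c ^ ((1 : ℝ) - (((j : ℕ) : ℝ) + 1)) *
        (((j : ℕ).factorial : ℝ) / (((j : ℕ) - (i : ℕ)).factorial : ℝ) *
          Real.Gamma (α + ((j : ℕ) : ℝ) + 1) /
          Real.sqrt (Real.Gamma (((i : ℕ) : ℝ) + 1) * Real.Gamma (α + ((i : ℕ) : ℝ) + 1)))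
    else 0

lemma lag_key (a : ℕ) : ∀ (b N : ℕ) (α : ℝ), -1 < α → a < N →
    ∑ l ∈ Finset.range N, (a.choose l : ℝ) * ((b.descFactorial l : ℝ) *
      (Real.Gamma (α + a + 1) * Real.Gamma (α + b + 1) / Real.Gamma (α + l + 1)))
      = Real.Gamma (a + b + α + 1) := by
  induction a with
  | zero =>
    intro b N α hα hN
    obtain ⟨N, rfl⟩ : ∃ M, N = M + 1 := ⟨N - 1, by omega⟩
    have h : Real.Gamma (α + 1) ≠ 0 := (Real.Gamma_pos_of_pos (by linarith)).ne'
    rw [Finset.sum_range_succ']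
    simp only [Nat.choose_zero_succ, Nat.choose_self, Nat.cast_zero, zero_mul,
      Finset.sum_const_zero, Nat.descFactorial_zero, Nat.cast_one, add_zero, zero_add, one_mul]
    rw [mul_div_cancel_left₀ _ h]
    congr 1; ring
  | succ a ih =>
    intro b N α hα hN
    obtain ⟨N, rfl⟩ : ∃ M, N = M + 1 := ⟨N - 1, by omega⟩
    have ha0 : (0:ℝ) ≤ a := a.cast_nonneg
    have hb0 : (0:ℝ) ≤ b := b.cast_nonneg
    have h1 := ih b (N + 1) α hα (by omega)
    have hG : Real.Gamma (α + (a + 1 : ℕ) + 1) = (α + a + 1) * Real.Gamma (α + a + 1) := by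
      rw [← Real.Gamma_add_one (by linarith)]; push_cast; congr 1; ring
    have hR : Real.Gamma ((a + 1 : ℕ) + b + α + 1)
        = (a + b + α + 1) * Real.Gamma (a + b + α + 1) := by
      rw [← Real.Gamma_add_one (by linarith)]; push_cast; congr 1; ring
    have h2 : ∑ l ∈ Finset.range N, (a.choose l : ℝ) * ((b.descFactorial (l + 1) : ℝ) *
        (Real.Gamma (α + (a + 1 : ℕ) + 1) * Real.Gamma (α + b + 1) /
          Real.Gamma (α + (l + 1 : ℕ) + 1))) = b * Real.Gamma (a + b + α + 1) := by
      cases b with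
      | zero => simp
      | succ b =>
        have h3 := ih b N (α + 1) (by linarith) (by omega)
        have e : (a + (b + 1 : ℕ) + α + 1 : ℝ) = a + b + (α + 1) + 1 := by push_cast; ring
        rw [e, ← h3, Finset.mul_sum]
        refine Finset.sum_congr rfl fun l _ => ?_
        rw [Nat.succ_descFactorial_succ]
        have e1 : (α + (a + 1 : ℕ) + 1 : ℝ) = α + 1 + a + 1 := by push_cast; ring
        have e2 : (α + (b + 1 : ℕ) + 1 : ℝ) = α + 1 + b + 1 := by push_cast; ring
        have e3 : (α + (l + 1 : ℕ) + 1 : ℝ) = α + 1 + l + 1 := by push_cast; ring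
        rw [e1, e2, e3]
        push_cast; ring
    have h4 : ∑ l ∈ Finset.range (N + 1), (a.choose l : ℝ) * ((b.descFactorial l : ℝ) *
      (Real.Gamma (α + (a + 1 : ℕ) + 1) * Real.Gamma (α + b + 1) / Real.Gamma (α + l + 1)))
      = (α + a + 1) * Real.Gamma (a + b + α + 1) := by
      rw [← h1, Finset.mul_sum]
      refine Finset.sum_congr rfl fun l _ => ?_
      rw [hG]; ring
    rw [hR, Finset.sum_range_succ']
    rw [Finset.sum_range_succ'] at h4
    simp only [Nat.choose_succ_succ, Nat.cast_add, add_mul _ _ (_ * _ : ℝ),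
      Finset.sum_add_distrib, Nat.choose_zero_right] at h2 h4 ⊢
    linarith

theorem lagMc_cholesky (α c : ℝ) (hα : -1 < α) (hc : 0 < c) (k : ℕ) (hk : 1 ≤ k) :
    lagMc α c k = (lagRc α c k)ᵀ * lagRc α c k := by
  ext i j
  rw [Matrix.mul_apply]
  simp only [lagMc, lagRc, Matrix.transpose_apply, Matrix.of_apply]
  obtain ⟨a, ha⟩ := i
  obtain ⟨b, hb⟩ := j
  simp only
  rw [← lag_key a b k α hα ha, Finset.sum_div, ← Fin.sum_univ_eq_sum_range (fun l =>
    (a.choose l : ℝ) * ((b.descFactorial l : ℝ) *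
      (Real.Gamma (α + a + 1) * Real.Gamma (α + b + 1) / Real.Gamma (α + l + 1))) /
      c ^ ((a : ℝ) + b + α + 1)) k]
  refine Finset.sum_congr rfl fun l _ => ?_
  obtain ⟨l, hl⟩ := l
  simp only
  by_cases hla : l ≤ a
  swap
  · rw [Nat.choose_eq_zero_of_lt (by omega), if_neg hla]; simp
  by_cases hlb : l ≤ b
  swap
  · rw [Nat.descFactorial_eq_zero_iff_lt.2 (by omega), if_neg hlb]; simp
  rw [if_pos hla, if_pos hlb]
  have hl0 : (0:ℝ) ≤ l := l.cast_nonneg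
  have g1 : 0 < Real.Gamma (α + l + 1) := Real.Gamma_pos_of_pos (by linarith)
  rw [Real.Gamma_nat_eq_factorial]
  have f1 : (0:ℝ) < l.factorial := by positivity
  have f2 : (0:ℝ) < (a - l).factorial := by positivity
  have f3 : (0:ℝ) < (b - l).factorial := by positivity
  have hs : 0 < Real.sqrt (l.factorial * Real.Gamma (α + l + 1)) := by positivity
  have hs2 := Real.mul_self_sqrt (show 0 ≤ l.factorial * Real.Gamma (α + l + 1) by positivity)
  have hch : (a.choose l : ℝ) = a.factorial / (l.factorial * (a - l).factorial) :=
    Nat.cast_choose ℝ hla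
  have hde : (b.descFactorial l : ℝ) = b.factorial / (b - l).factorial := by
    rw [eq_div_iff f3.ne', mul_comm]; exact_mod_cast Nat.factorial_mul_descFactorial hlb
  have hpow : (c ^ ((a : ℝ) + b + α + 1))⁻¹ = (c ^ (-(α + 1) / 2) * c ^ ((1 : ℝ) - (a + 1))) *
      (c ^ (-(α + 1) / 2) * c ^ ((1 : ℝ) - (b + 1))) := by
    rw [← Real.rpow_neg hc.le, ← Real.rpow_add hc, ← Real.rpow_add hc, ← Real.rpow_add hc]
    congr 1; ring
  rw [div_eq_mul_inv _ (c ^ _), hpow, hch, hde]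
  generalize Real.sqrt (l.factorial * Real.Gamma (α + l + 1)) = s at *
  generalize Real.Gamma (α + l + 1) = g at *
  have hg : g = s * s / l.factorial := by field_simp; linarith
  subst hg
  field_simp
end

section
/- Let α > -1, c > 0 and k ≥ 1. Let R_k^{α,c} ∈ ℝ^{k×k} be the upper triangular matrix with (R_k^{α,c})_{ij} = c^{−(α+1)/2} · c^{1−j} · ((j−1)!/(j−i)!) · Γ(α+j) / √(Γ(i)Γ(α+i)) for i ≤ j and 0 otherwise. Then R_k^{α,c} is invertible and its inverse is the upper triangular matrix with entries ((R_k^{α,c})^{-1})_{ij} = c^{(α+1)/2} · c^{i−1} · (−1)^{i+j} √( (j−1)! Γ(α+j) ) / ( (j−i)! Γ(i) Γ(α+i) ) for i ≤ j and 0 otherwise. -/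
open Matrix

/-- The claimed inverse of `R_k^{α,c}`: the upper triangular matrix with entries
`c^{(α+1)/2} · c^{i−1} · (−1)^{i+j} √((j−1)! Γ(α+j)) / ((j−i)! Γ(i) Γ(α+i))`
for `i ≤ j` (1-based indices), and `0` otherwise. -/
noncomputable def lagRcInv (α c : ℝ) (k : ℕ) : Matrix (Fin k) (Fin k) ℝ :=
  Matrix.of fun i j =>
    if (i : ℕ) ≤ (j : ℕ) then
      c ^ ((α + 1) / 2) * c ^ ((((i : ℕ) : ℝ) + 1) - 1) *
        ((-1 : ℝ) ^ ((i : ℕ) + (j : ℕ)) *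
          Real.sqrt (((j : ℕ).factorial : ℝ) * Real.Gamma (α + ((j : ℕ) : ℝ) + 1)) /
          ((((j : ℕ) - (i : ℕ)).factorial : ℝ) * Real.Gamma (((i : ℕ) : ℝ) + 1) *
            Real.Gamma (α + ((i : ℕ) : ℝ) + 1)))
    else 0

lemma key_sum (k i l : ℕ) (hl : l < k) :
    ∑ j : Fin k, (if i ≤ (j:ℕ) then (1:ℝ) / (((j:ℕ) - i).factorial : ℝ) else 0) *
      (if (j:ℕ) ≤ l then (-1:ℝ)^((j:ℕ)+l) / ((l - (j:ℕ)).factorial : ℝ) else 0)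
      = if i = l then 1 else 0 := by
  rw [Fin.sum_univ_eq_sum_range (fun j => (if i ≤ j then (1:ℝ) / ((j - i).factorial : ℝ) else 0) *
      (if j ≤ l then (-1:ℝ)^(j+l) / ((l - j).factorial : ℝ) else 0)) k]
  rw [← Finset.sum_subset (s₁ := Finset.Ico i (l+1))]
  · rw [Finset.sum_Ico_eq_sum_range]
    rcases lt_or_ge l i with h | h
    · rw [if_neg (by omega), show l + 1 - i = 0 by omega]; simp
    obtain ⟨d, rfl⟩ := Nat.exists_eq_add_of_le h
    have e : ∀ x ∈ Finset.range (i + d + 1 - i),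
        (if i ≤ i + x then (1:ℝ) / ((i + x - i).factorial : ℝ) else 0) *
        (if i + x ≤ i + d then (-1:ℝ)^(i + x + (i + d)) / ((i + d - (i + x)).factorial : ℝ) else 0)
        = (-1:ℝ)^d / (d.factorial : ℝ) * (((-1:ℤ)^x * (d.choose x : ℤ) : ℤ) : ℝ) := by
      intro x hx
      rw [Finset.mem_range] at hx
      have hx : x ≤ d := by omega
      rw [if_pos (by omega), if_pos (by omega), show i + x - i = x by omega,
        show i + d - (i + x) = d - x by omega]
      push_cast
      rw [Nat.cast_choose ℝ hx, show i + x + (i + d) = 2 * i + (x + d) by ring, pow_add, pow_mul]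
      have := Nat.factorial_ne_zero d
      field_simp
      simp [pow_add, mul_comm]
    rw [Finset.sum_congr rfl e, ← Finset.mul_sum, ← Int.cast_sum,
      show i + d + 1 - i = d + 1 by omega, Int.alternating_sum_range_choose]
    by_cases hd : d = 0
    · simp [hd]
    · simp [hd]
  · intro x hx
    simp only [Finset.mem_Ico, Finset.mem_range] at *
    omega
  · intro x _ hx
    simp only [Finset.mem_Ico] at hx
    by_cases h1 : i ≤ x
    · rw [if_neg (show ¬ x ≤ l by omega), mul_zero]
    · rw [if_neg h1, zero_mul]

lemma lagRc_mul (α c : ℝ) (hα : -1 < α) (hc : 0 < c) (k : ℕ) :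
    lagRc α c k * lagRcInv α c k = 1 := by
  have hG : ∀ n : ℕ, 0 < Real.Gamma (α + (n:ℝ) + 1) := fun n =>
    Real.Gamma_pos_of_pos (by have : (0:ℝ) ≤ n := n.cast_nonneg
                              linarith)
  ext i l
  rw [Matrix.mul_apply, Matrix.one_apply]
  set s : ℕ → ℝ := fun n => Real.sqrt ((n.factorial : ℝ) * Real.Gamma (α + (n:ℝ) + 1)) with hs
  have hspos : ∀ n, 0 < s n := fun n => Real.sqrt_pos.2
    (mul_pos (by exact_mod_cast n.factorial_pos) (hG n))
  have e : ∀ j : Fin k, lagRc α c k i j * lagRcInv α c k j l = s l / s i *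
      ((if (i:ℕ) ≤ (j:ℕ) then (1:ℝ) / (((j:ℕ) - (i:ℕ)).factorial : ℝ) else 0) *
      (if (j:ℕ) ≤ (l:ℕ) then (-1:ℝ)^((j:ℕ)+(l:ℕ)) / (((l:ℕ) - (j:ℕ)).factorial : ℝ) else 0)) := by
    intro j
    simp only [lagRc, lagRcInv, Matrix.of_apply, Real.Gamma_nat_eq_factorial]
    by_cases h1 : (i:ℕ) ≤ (j:ℕ)
    · by_cases h2 : (j:ℕ) ≤ (l:ℕ)
      · simp only [if_pos h1, if_pos h2]
        change _ * (_ / s i) * (_ * (_ * s l / _)) = _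
        have a1 : c ^ (-(α + 1) / 2) * c ^ ((α + 1) / 2) = 1 := by
          rw [← Real.rpow_add hc, show -(α + 1) / 2 + (α + 1) / 2 = 0 by ring, Real.rpow_zero]
        have a2 : c ^ ((1 : ℝ) - (((j : ℕ) : ℝ) + 1)) * c ^ ((((j : ℕ) : ℝ) + 1) - 1) = 1 := by
          rw [← Real.rpow_add hc, show (1 : ℝ) - (((j : ℕ) : ℝ) + 1) + ((((j : ℕ) : ℝ) + 1) - 1) = 0 by ring,
            Real.rpow_zero]
        generalize c ^ (-(α + 1) / 2) = x1 at *
        generalize c ^ ((α + 1) / 2) = x2 at *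
        generalize c ^ ((1 : ℝ) - (((j : ℕ) : ℝ) + 1)) = x3 at *
        generalize c ^ ((((j : ℕ) : ℝ) + 1) - 1) = x4 at *
        have g := (hG j).ne'
        have si := (hspos i).ne'
        have f0 : ((j:ℕ).factorial : ℝ) ≠ 0 := by exact_mod_cast (j:ℕ).factorial_ne_zero
        have f1 : (((j:ℕ) - (i:ℕ)).factorial : ℝ) ≠ 0 := by exact_mod_cast Nat.factorial_ne_zero _
        have f2 : (((l:ℕ) - (j:ℕ)).factorial : ℝ) ≠ 0 := by exact_mod_cast Nat.factorial_ne_zero _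
        generalize Real.Gamma (α + ((j:ℕ):ℝ) + 1) = G at *
        generalize s i = S at *
        generalize s l = T at *
        trans (x1 * x2) * (x3 * x4) * (T / S * (1 / (((j:ℕ) - (i:ℕ)).factorial : ℝ) *
          ((-1:ℝ)^((j:ℕ)+(l:ℕ)) / (((l:ℕ) - (j:ℕ)).factorial : ℝ))))
        · field_simp
        · rw [a1, a2]; ring
      · simp [h2]
    · simp [h1]
  rw [Finset.sum_congr rfl (fun j _ => e j), ← Finset.mul_sum, key_sum k i l l.2]
  by_cases h : i = l
  · subst h; simp [(hspos i).ne']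
  · rw [if_neg h, if_neg (fun h' => h (Fin.ext h')), mul_zero]

theorem lagRc_inverse (α c : ℝ) (hα : -1 < α) (hc : 0 < c) (k : ℕ) (hk : 1 ≤ k) :
    IsUnit (lagRc α c k) ∧ (lagRc α c k)⁻¹ = lagRcInv α c k := by
  have h := lagRc_mul α c hα hc k
  exact ⟨IsUnit.of_mul_eq_one _ h, Matrix.inv_eq_right_inv h⟩
end
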